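/- arXiv:1108.2885 — 7 statements merged into one kernel-verified Lean document; each statement's English description precedes it below -/
import Mathlib

section
/- Nonstandard characterization of the limit of a sequence: for u : ℕ → ℝ and L : ℝ, the sequence u tends to L (along atTop) if and only if for every hypernatural N that is infinite (i.e. N exceeds the constant germ of every natural number), the hyperreal N.map u has standard part L, i.e. IsSt (Germ.map u N) L. -/
open Filter Hyperreal

/-!
Infinite hypernaturals are exactly the germs of sequences `f : ℕ → ℕ` with `f → ∞` along the
hyperfilter (`infinite_coe_iff_tendsto`), and the germ of `u ∘ f` has standard part `L` iff
`u ∘ f → L` along the hyperfilter. The forward direction is then composition of limits. Conversely,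
if `u` does not tend to `L`, some subsequence `u ∘ φ` avoids a fixed neighbourhood of `L`; the germ
of `φ` is infinite, as the hyperfilter refines `atTop`, but its image does not have standard
part `L`.
-/

theorem infinite_coe_iff_tendsto (f : ℕ → ℕ) :
    (∀ n : ℕ, (n : Germ (hyperfilter ℕ : Filter ℕ) ℕ) <
      (f : Germ (hyperfilter ℕ : Filter ℕ) ℕ)) ↔
      Tendsto f (hyperfilter ℕ : Filter ℕ) atTop := by
  have key (n : ℕ) : (n : Germ (hyperfilter ℕ : Filter ℕ) ℕ) <
      (f : Germ (hyperfilter ℕ : Filter ℕ) ℕ) ↔ ∀ᶠ k in hyperfilter ℕ, n < f k :=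
    Germ.coe_lt (f := fun _ => n)
  simp_rw [key]
  exact ⟨fun h => tendsto_atTop.2 fun n => (h n).mono fun _ hk => hk.le,
    fun h n => h.eventually_gt_atTop n⟩

set_option linter.deprecated false in
theorem isSt_map_coe_iff_tendsto (u : ℕ → ℝ) (f : ℕ → ℕ) (L : ℝ) :
    IsSt (Germ.map u (f : Germ (hyperfilter ℕ : Filter ℕ) ℕ) : ℝ*) L ↔
      Tendsto (u ∘ f) (hyperfilter ℕ : Filter ℕ) (nhds L) :=
  isSt_ofSeq_iff_tendsto

theorem tendsto_iff_isSt_map_infinite_hypernat (u : ℕ → ℝ) (L : ℝ) :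
    Filter.Tendsto u Filter.atTop (nhds L) ↔
      ∀ N : Filter.Germ (Filter.hyperfilter ℕ : Filter ℕ) ℕ,
        (∀ n : ℕ, (n : Filter.Germ (Filter.hyperfilter ℕ : Filter ℕ) ℕ) < N) →
        IsSt (Filter.Germ.map u N : ℝ*) L := by
  constructor
  · intro hu N hN
    induction N using Germ.inductionOn with
    | _ f =>
      exact (isSt_map_coe_iff_tendsto u f L).2 (hu.comp ((infinite_coe_iff_tendsto f).1 hN))
  · intro h
    by_contra hu
    obtain ⟨s, hs, hfreq⟩ := not_tendsto_iff_exists_frequently_notMem.1 hu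
    obtain ⟨φ, hφ, hφs⟩ := extraction_of_frequently_atTop hfreq
    have hlim := (isSt_map_coe_iff_tendsto u φ L).1 <| h φ <|
      (infinite_coe_iff_tendsto φ).2 (hφ.tendsto_atTop.mono_left Nat.hyperfilter_le_atTop)
    obtain ⟨k, hk⟩ := (hlim.eventually_mem hs).exists
    exact hφs k hk
end

section
/- Nonstandard characterization of the derivative: for f : ℝ → ℝ, x L : ℝ, one has HasDerivAt f L x if and only if for every nonzero infinitesimal hyperreal ε, the quotient (f*(x + ε) − f(x)) / ε has standard part L, i.e. IsSt ((Germ.map f (↑x + ε) − ↑(f x)) / ε) L. -/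
/-!
Represent a hyperreal by a sequence `u` of reals: it is a nonzero infinitesimal iff `u` tends to
`𝓝[≠] 0` along the hyperfilter, and the nonstandard quotient is then represented by the sequence of
difference quotients along `u`. So the forward direction is composition of limits. Conversely, if
the difference quotient fails to converge to `L` at `0`, some neighbourhood of `L` is avoided along
an entire ordinary sequence tending to `𝓝[≠] 0`; since the hyperfilter is finer than `atTop`,
this sequence represents a nonzero infinitesimal violating the hypothesis.
-/

open Filter Hyperreal

open Topology

set_option linter.deprecated false

/-- A representing sequence detects nonzero infinitesimals as convergence to the punctured
neighbourhood filter of `0`. -/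
lemma tendsto_punctured_iff (u : ℕ → ℝ) :
    Tendsto u (hyperfilter ℕ) (𝓝[≠] 0) ↔ ofSeq u ≠ 0 ∧ Infinitesimal (ofSeq u) := by
  have h0 : ofSeq u ≠ 0 ↔ ∀ᶠ n in (hyperfilter ℕ : Filter ℕ), u n ≠ 0 :=
    (Filter.Germ.coe_eq.not).trans Ultrafilter.eventually_not.symm
  rw [tendsto_nhdsWithin_iff, h0, Infinitesimal, isSt_ofSeq_iff_tendsto]
  exact and_comm

/-- On representatives, the nonstandard quotient is the sequence of difference quotients. -/
lemma isSt_quotient_ofSeq_iff (f : ℝ → ℝ) (x L : ℝ) (u : ℕ → ℝ) :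
    IsSt (Sub.sub (α := ℝ*) (Filter.Germ.map f ((x : ℝ*) + ofSeq u)) ((f x : ℝ) : ℝ*) / ofSeq u) L
      ↔ Tendsto (fun n ↦ (u n)⁻¹ • (f (x + u n) - f x)) (hyperfilter ℕ) (𝓝 L) := by
  have h : Sub.sub (α := ℝ*) (Filter.Germ.map f ((x : ℝ*) + ofSeq u)) ((f x : ℝ) : ℝ*) / ofSeq u
      = ofSeq fun n ↦ (f (x + u n) - f x) / u n := rfl
  rw [h, isSt_ofSeq_iff_tendsto]
  simp only [smul_eq_mul, div_eq_inv_mul]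

theorem hasDerivAt_iff_isSt_quotient (f : ℝ → ℝ) (x L : ℝ) :
    HasDerivAt f L x ↔
      ∀ dx : ℝ*, dx ≠ 0 → Infinitesimal dx →
        IsSt (Sub.sub (α := ℝ*) (Filter.Germ.map f ((x : ℝ*) + dx)) ((f x : ℝ) : ℝ*) / dx) L := by
  rw [hasDerivAt_iff_tendsto_slope_zero]
  constructor
  · intro h dx h0 hdx
    obtain ⟨u, rfl⟩ := ofSeq_surjective dx
    exact (isSt_quotient_ofSeq_iff f x L u).2 (h.comp ((tendsto_punctured_iff u).2 ⟨h0, hdx⟩))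
  · intro h
    by_contra hn
    obtain ⟨s, hs, hfreq⟩ := not_tendsto_iff_exists_frequently_notMem.1 hn
    obtain ⟨u, hu, hus⟩ := exists_seq_forall_of_frequently hfreq
    obtain ⟨h0, hdx⟩ := (tendsto_punctured_iff u).1 (hu.mono_left Nat.hyperfilter_le_atTop)
    have hlim := (isSt_quotient_ofSeq_iff f x L u).1 (h _ h0 hdx)
    obtain ⟨n, hmem⟩ := (hlim.eventually_mem hs).exists
    exact hus n hmem
end

section
/- Nonstandard characterization of uniform convergence: for f : ℕ → ℝ → ℝ and g : ℝ → ℝ, TendstoUniformly f g atTop holds if and only if for every infinite hypernatural N and every hyperreal x, the hyperreal Germ.map₂ f N x is infinitely close to g*(x) (i.e. Germ.map₂ f N x − Germ.map g x is infinitesimal). -/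
open Filter Hyperreal

/-!
Everything is read off on representing sequences modulo the hyperfilter. If `f` converges uniformly
to `g`, then for each `δ > 0` there is a threshold `n₀` beyond which `|f n y - g y| < δ` for all
`y`; an infinite `N` exceeds `n₀` almost everywhere, whatever the point `x` is. Conversely, if
uniform convergence fails for some `δ`, choose for each `n` an index `m n ≥ n` and a point `y n`
with `δ ≤ |f (m n) (y n) - g (y n)|`: the germ of `m` is infinite because the hyperfilter is
finer than `atTop`, and with the germ of `y` it violates infinite closeness.
-/

set_option linter.deprecated false

theorem infinitesimal_ofSeq_iff (u : ℕ → ℝ) :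
    Infinitesimal (ofSeq u) ↔ ∀ δ : ℝ, 0 < δ → ∀ᶠ n in hyperfilter ℕ, |u n| < δ := by
  rw [infinitesimal_def]
  refine forall₂_congr fun δ _ => ?_
  simp only [abs_lt, eventually_and]
  exact and_congr (ofSeq_lt_ofSeq (f := fun _ => -δ)) (ofSeq_lt_ofSeq (g := fun _ => δ))

theorem tendstoUniformly_iff_microclose (f : ℕ → ℝ → ℝ) (g : ℝ → ℝ) :
    TendstoUniformly f g Filter.atTop ↔
      ∀ N : Filter.Germ (Filter.hyperfilter ℕ : Filter ℕ) ℕ,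
        (∀ n : ℕ, (n : Filter.Germ (Filter.hyperfilter ℕ : Filter ℕ) ℕ) < N) →
        ∀ x : ℝ*,
          Infinitesimal (Filter.Germ.map₂ f N x - Filter.Germ.map g x) := by
  constructor
  · intro h N hN x
    obtain ⟨y, rfl⟩ := ofSeq_surjective x
    induction N using Germ.inductionOn with | _ m =>
    refine (infinitesimal_ofSeq_iff fun i => f (m i) (y i) - g (y i)).2 fun δ hδ => ?_
    obtain ⟨n₀, hn₀⟩ := eventually_atTop.1 (Metric.tendstoUniformly_iff.1 h δ hδ)
    have hm : ∀ᶠ i in hyperfilter ℕ, n₀ < m i := Germ.coe_lt.1 (hN n₀)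
    filter_upwards [hm] with i hi
    rw [← Real.dist_eq, dist_comm]
    exact hn₀ (m i) hi.le (y i)
  · intro h
    by_contra hnot
    rw [Metric.tendstoUniformly_iff] at hnot
    simp only [eventually_atTop] at hnot
    push Not at hnot
    obtain ⟨δ, hδ, hbad⟩ := hnot
    choose m hm y hy using hbad
    have hinf : ∀ n : ℕ, (n : Germ (hyperfilter ℕ : Filter ℕ) ℕ) < (m : Germ _ ℕ) := fun n =>
      Germ.coe_lt.2 <| (((eventually_gt_atTop n).mono fun i hi => hi.trans_le (hm i)).filter_mono
        Nat.hyperfilter_le_atTop)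
    have hclose := (infinitesimal_ofSeq_iff fun i => f (m i) (y i) - g (y i)).1
      (h m hinf (ofSeq y)) δ hδ
    obtain ⟨i, hi⟩ := hclose.exists
    rw [← Real.dist_eq, dist_comm] at hi
    exact (hy i).not_gt hi
end

section
/- Cauchy's example of an infinitesimal of order 0: for the function g(i) = (log i)⁻¹, (a) for every real r < 0, g(i)/i^r tends to 0 as i → 0⁺, and (b) for every real r > 0, |g(i)|/i^r tends to +∞ as i → 0⁺ (with i ^ r denoting Real.rpow). -/
/-!
For `r < 0` the quotient is `(log i)⁻¹ * i ^ (-r)`, a product of two factors tending to `0`.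
For `r > 0` it is the reciprocal of `|log i * i ^ r|`, which tends to `0` through positive values
because powers dominate the logarithm (`tendsto_log_mul_rpow_nhdsGT_zero`).
-/

open Filter Real

theorem inv_log_infinitesimal_order_zero (r : ℝ) :
    (r < 0 → Filter.Tendsto (fun i : ℝ => (Real.log i)⁻¹ / i ^ r)
        (nhdsWithin 0 (Set.Ioi 0)) (nhds 0)) ∧
    (0 < r → Filter.Tendsto (fun i : ℝ => |(Real.log i)⁻¹| / i ^ r)
        (nhdsWithin 0 (Set.Ioi 0)) Filter.atTop) := by
  refine ⟨fun hr => ?_, fun hr => ?_⟩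
  · have hlog : Tendsto (fun i : ℝ => (log i)⁻¹) (nhdsWithin 0 (Set.Ioi 0)) (nhds 0) :=
      tendsto_log_nhdsGT_zero.inv_tendsto_atBot
    have hpow : Tendsto (fun i : ℝ => i ^ (-r)) (nhdsWithin 0 (Set.Ioi 0)) (nhds 0) := by
      have h := (continuousAt_rpow_const 0 (-r) (Or.inr (by linarith))).tendsto
      rw [zero_rpow (by linarith)] at h
      exact h.mono_left nhdsWithin_le_nhds
    have hprod := hlog.mul hpow
    rw [mul_zero] at hprod
    refine hprod.congr' ?_
    filter_upwards [self_mem_nhdsWithin] with i hi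
    rw [rpow_neg (le_of_lt hi), div_eq_mul_inv]
  · have hzero : Tendsto (fun i : ℝ => |log i * i ^ r|) (nhdsWithin 0 (Set.Ioi 0)) (nhds 0) := by
      simpa using (tendsto_log_mul_rpow_nhdsGT_zero hr).abs
    -- Positivity needs `log i ≠ 0`, which holds on `(0, 1)`.
    have hpos : ∀ᶠ i : ℝ in nhdsWithin 0 (Set.Ioi 0), |log i * i ^ r| ∈ Set.Ioi (0 : ℝ) := by
      filter_upwards [Ioo_mem_nhdsGT (zero_lt_one' ℝ)] with i hi
      exact abs_pos.2 (mul_ne_zero (log_neg hi.1 hi.2).ne (rpow_pos_of_pos hi.1 r).ne')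
    refine (tendsto_nhdsWithin_iff.2 ⟨hzero, hpos⟩).inv_tendsto_nhdsGT_zero.congr' ?_
    filter_upwards [self_mem_nhdsWithin] with i hi
    rw [Pi.inv_apply, abs_mul, abs_of_pos (rpow_pos_of_pos hi r), mul_inv, abs_inv, div_eq_mul_inv]
end

section
/- The Cauchy order of a product is the sum of the orders: let f, g : ℝ → ℝ and a, b : ℝ. Assume for all r < a, f(i)/i^r → 0 as i → 0⁺ and for all r > a, |f(i)/i^r| → +∞; and assume for all r < b, g(i)/i^r → 0 and for all r > b, |g(i)/i^r| → +∞. Then for all r < a + b, f(i)·g(i)/i^r → 0 as i → 0⁺, and for all r > a + b, |f(i)·g(i)/i^r| → +∞ as i → 0⁺. -/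
/-!
Give each factor half of the gap between `r` and `a + b`: with `s = a + (r - (a + b)) / 2` and
`t = b + (r - (a + b)) / 2` one has `s + t = r`, so for `i > 0` the quotient `f i * g i / i ^ r` is
the product of `f i / i ^ s` and `g i / i ^ t`. If `r < a + b` then `s < a` and `t < b`, and both
factors tend to `0`; if `a + b < r` then `a < s` and `b < t`, and both tend to infinity in absolute
value.
-/

open Filter Real

theorem cauchy_order_mul (f g : ℝ → ℝ) (a b : ℝ)
    (hf1 : ∀ r : ℝ, r < a → Filter.Tendsto (fun i : ℝ => f i / i ^ r)
      (nhdsWithin 0 (Set.Ioi 0)) (nhds 0))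
    (hf2 : ∀ r : ℝ, a < r → Filter.Tendsto (fun i : ℝ => |f i / i ^ r|)
      (nhdsWithin 0 (Set.Ioi 0)) Filter.atTop)
    (hg1 : ∀ r : ℝ, r < b → Filter.Tendsto (fun i : ℝ => g i / i ^ r)
      (nhdsWithin 0 (Set.Ioi 0)) (nhds 0))
    (hg2 : ∀ r : ℝ, b < r → Filter.Tendsto (fun i : ℝ => |g i / i ^ r|)
      (nhdsWithin 0 (Set.Ioi 0)) Filter.atTop) :
    (∀ r : ℝ, r < a + b → Filter.Tendsto (fun i : ℝ => f i * g i / i ^ r)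
      (nhdsWithin 0 (Set.Ioi 0)) (nhds 0)) ∧
    (∀ r : ℝ, a + b < r → Filter.Tendsto (fun i : ℝ => |f i * g i / i ^ r|)
      (nhdsWithin 0 (Set.Ioi 0)) Filter.atTop) := by
  have key : ∀ r : ℝ, ∀ i ∈ Set.Ioi (0 : ℝ),
      f i / i ^ (a + (r - (a + b)) / 2) * (g i / i ^ (b + (r - (a + b)) / 2))
        = f i * g i / i ^ r := by
    intro r i hi
    rw [div_mul_div_comm, ← Real.rpow_add hi]
    ring_nf
  refine ⟨fun r hr => ?_, fun r hr => ?_⟩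
  · have h := (hf1 (a + (r - (a + b)) / 2) (by linarith)).mul
      (hg1 (b + (r - (a + b)) / 2) (by linarith))
    rw [mul_zero] at h
    refine h.congr' ?_
    filter_upwards [self_mem_nhdsWithin] with i hi using key r i hi
  · refine ((hf2 (a + (r - (a + b)) / 2) (by linarith)).atTop_mul_atTop₀
      (hg2 (b + (r - (a + b)) / 2) (by linarith))).congr' ?_
    filter_upwards [self_mem_nhdsWithin] with i hi
    rw [← abs_mul, key r i hi]
end

section
/- Mean value theorem over arbitrary hyperreal intervals (the Klein–Fraenkel criterion, satisfied by transfer): let f, f' : ℝ → ℝ with HasDerivAt f (f' x) x for every real x. Then for all hyperreals a < b there exists a hyperreal c with a < c and c < b such that f*(b) − f*(a) = (f')*(c) · (b − a), where f* = Germ.map f and (f')* = Germ.map f'. -/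
open Filter Hyperreal

/-!
Transfer is carried out by hand on representatives. If `a = [u]` and `b = [v]` with `a < b`, then
`u n < v n` for almost every `n`, and for these `n` the real mean value theorem provides
`w n ∈ (u n, v n)`. The germ `c = [w]` satisfies both strict inequalities and the mean value
identity, as each of them holds for almost every index.
-/

theorem hyperreal_mean_value_theorem (f f' : ℝ → ℝ)
    (hf : ∀ x : ℝ, HasDerivAt f (f' x) x) :
    ∀ a b : ℝ*, a < b → ∃ c : ℝ*, a < c ∧ c < b ∧
      Filter.Germ.map f b - Filter.Germ.map f a =
        Mul.mul (α := ℝ*) (Filter.Germ.map f' c) (b - a) := by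
  intro a b hab
  obtain ⟨u, rfl⟩ := Quotient.exists_rep a
  obtain ⟨v, rfl⟩ := Quotient.exists_rep b
  have huv : ∀ᶠ n in (hyperfilter ℕ : Filter ℕ), u n < v n := Germ.coe_lt.1 hab
  have hmvt : ∀ n, ∃ c, u n < v n →
      u n < c ∧ c < v n ∧ f (v n) - f (u n) = f' c * (v n - u n) := by
    intro n
    by_cases h : u n < v n
    · obtain ⟨c, hc, hslope⟩ := exists_hasDerivAt_eq_slope f f' h
        (fun x _ => (hf x).continuousAt.continuousWithinAt) (fun x _ => hf x)
      refine ⟨c, fun _ => ⟨hc.1, hc.2, ?_⟩⟩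
      rw [hslope, div_mul_cancel₀ _ (sub_pos.2 h).ne']
    · exact ⟨0, fun h' => absurd h' h⟩
  choose w hw using hmvt
  refine ⟨Germ.ofFun w, Germ.coe_lt.2 (huv.mono fun n hn => (hw n hn).1),
    Germ.coe_lt.2 (huv.mono fun n hn => (hw n hn).2.1), ?_⟩
  exact Germ.coe_eq.2 (huv.mono fun n hn => (hw n hn).2.2)
end

section
/- Every polynomial of odd degree over the hyperreals has a root: for every polynomial p over ℝ* with natDegree p odd, there exists x : ℝ* with p.eval x = 0. -/
open Hyperreal

/-!
A polynomial `p` over `ℝ*` lifts along the quotient map `(ℕ → ℝ) →+* ℝ*` to a polynomial `q` of the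
same degree with coefficients in `ℕ → ℝ`, that is, to a sequence of real polynomials `qₙ`. Since
the leading coefficient of `p` is nonzero, `qₙ` has the same odd degree for almost all `n`
(modulo the hyperfilter), hence a real root `xₙ` by the intermediate value theorem
(`real_odd_exists_root`). The class of `(xₙ)` is a root of `p`.
-/

lemma real_odd_exists_root_of_leadingCoeff_pos (p : Polynomial ℝ) (hp : Odd p.natDegree)
    (hl : 0 < p.leadingCoeff) : ∃ x, p.eval x = 0 := by
  have hdeg : 0 < p.degree := Polynomial.natDegree_pos_iff_degree_pos.1 hp.pos
  have htop := p.tendsto_atTop_of_leadingCoeff_nonneg hdeg hl.le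
  -- The behaviour of `p` at `-∞` is that of `p(-X)` at `+∞`, whose leading coefficient is negative.
  have hnat : (p.comp (-Polynomial.X)).natDegree = p.natDegree := by
    simp [Polynomial.natDegree_comp]
  have hbot := (p.comp (-Polynomial.X)).tendsto_atBot_of_leadingCoeff_nonpos
    (Polynomial.natDegree_pos_iff_degree_pos.1 (hnat ▸ hp.pos))
    (by rw [Polynomial.leadingCoeff_comp (by simp)]
        simp [hp.neg_one_pow, hl.le])
  obtain ⟨b, hb⟩ := (htop.eventually_ge_atTop 0).exists
  obtain ⟨a, ha⟩ := (hbot.eventually_le_atBot 0).exists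
  rw [Polynomial.eval_comp] at ha
  exact mem_range_of_exists_le_of_exists_ge p.continuous ⟨_, ha⟩ ⟨b, hb⟩

lemma real_odd_exists_root (p : Polynomial ℝ) (hp : Odd p.natDegree) : ∃ x, p.eval x = 0 := by
  have h0 : p.leadingCoeff ≠ 0 := by
    rintro h
    simp [Polynomial.leadingCoeff_eq_zero.1 h] at hp
  rcases h0.lt_or_gt with h | h
  · obtain ⟨x, hx⟩ := real_odd_exists_root_of_leadingCoeff_pos (-p) (by simpa using hp)
      (by simpa using h)
    exact ⟨x, by simpa using hx⟩
  · exact real_odd_exists_root_of_leadingCoeff_pos p hp h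

/-- The quotient map sending a real sequence to the hyperreal it represents. -/
noncomputable def hyperrealMk : (ℕ → ℝ) →+* ℝ* :=
  Filter.Germ.coeRingHom (Filter.hyperfilter ℕ : Filter ℕ)

lemma hyperrealMk_surjective : Function.Surjective hyperrealMk :=
  Quotient.mk_surjective

lemma hyperrealMk_eq_zero {f : ℕ → ℝ} :
    hyperrealMk f = 0 ↔ ∀ᶠ n in (Filter.hyperfilter ℕ : Filter ℕ), f n = 0 :=
  Filter.Germ.coe_eq

theorem hyperreal_odd_degree_polynomial_has_root (p : Polynomial ℝ*)
    (hp : Odd p.natDegree) : ∃ x : ℝ*, p.eval x = 0 := by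
  obtain ⟨q, hq, hdeg⟩ := Polynomial.exists_natDegree_eq_of_mem_lifts
    (Polynomial.mem_lifts_of_surjective hyperrealMk_surjective p)
  have hlead : hyperrealMk (q.coeff p.natDegree) ≠ 0 := by
    rw [← Polynomial.coeff_map, hq, Polynomial.coeff_natDegree, Ne,
      Polynomial.leadingCoeff_eq_zero]
    rintro rfl
    simp at hp
  have hev : ∀ᶠ n in (Filter.hyperfilter ℕ : Filter ℕ), q.coeff p.natDegree n ≠ 0 := by
    rw [Ne, hyperrealMk_eq_zero] at hlead
    exact Ultrafilter.eventually_not.2 hlead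
  have hroot : ∀ n, ∃ x : ℝ, q.coeff p.natDegree n ≠ 0 →
      (q.map (Pi.evalRingHom (fun _ => ℝ) n)).eval x = 0 := by
    intro n
    by_cases h : q.coeff p.natDegree n = 0
    · exact ⟨0, fun h' => absurd h h'⟩
    · obtain ⟨x, hx⟩ := real_odd_exists_root (q.map (Pi.evalRingHom (fun _ => ℝ) n)) (by
        rw [Polynomial.natDegree_map_of_leadingCoeff_ne_zero, hdeg]
        · exact hp
        · rw [Polynomial.leadingCoeff, hdeg]
          exact h)
      exact ⟨x, fun _ => hx⟩
  choose x hx using hroot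
  refine ⟨hyperrealMk x, ?_⟩
  rw [← hq, Polynomial.eval_map_apply, hyperrealMk_eq_zero]
  filter_upwards [hev] with n hn
  rw [← hx n hn]
  exact (Polynomial.eval_map_apply (Pi.evalRingHom (fun _ => ℝ) n) x).symm
end
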